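/- Let f : A → B be a faithfully flat homomorphism of commutative rings, let M′ be a B-module, and let φ : M′ ⊗_A B → B ⊗_A M′ be an isomorphism of B ⊗_A B-modules, where B ⊗_A B acts on M′ ⊗_A B by (b₁ ⊗ b₂)(m ⊗ b) = b₁m ⊗ b₂b and on B ⊗_A M′ by (b₁ ⊗ b₂)(b ⊗ m) = b₁b ⊗ b₂m. Define φ₁ : B ⊗_A M′ ⊗_A B → B ⊗_A B ⊗_A M′, φ₂ : M′ ⊗_A B ⊗_A B → B ⊗_A B ⊗_A M′, and φ₃ : M′ ⊗_A B ⊗_A B → B ⊗_A M′ ⊗_A B by tensoring φ with the identity of B in the first, second, and third tensor positions respectively (so φ₁ = id_B ⊗ φ, φ₂ applies φ to the outer factors M′ and the second B leaving the third B in place, and φ₃ = φ ⊗ id_B). Assume the cocycle condition φ₂ = φ₁ ∘ φ₃. Then M := {m ∈ M′ | 1 ⊗ m = φ(m ⊗ 1)} is an A-submodule of M′ (via f), and the map B ⊗_A M → M′, b ⊗ m ↦ b • m, is bijective. -/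

import Mathlib

open scoped TensorProduct

section DescentData

variable (A B M' : Type u) [CommRing A] [CommRing B] [Algebra A B]
  [AddCommGroup M'] [Module A M'] [Module B M'] [IsScalarTower A B M']

/-- Multiplication by `b : B` on the `B`-module `M'`, as an `A`-linear map. -/
noncomputable def bSmul (b : B) : M' →ₗ[A] M' :=
  (LinearMap.lsmul B M' b).restrictScalars A

/-- `φ₁ = id_B ⊗ φ`, tensoring `φ` with `id_B` in the first position. -/
noncomputable def phiOne (φ : M' ⊗[A] B →ₗ[A] B ⊗[A] M') :
    B ⊗[A] (M' ⊗[A] B) →ₗ[A] B ⊗[A] (B ⊗[A] M') :=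
  TensorProduct.map LinearMap.id φ

/-- `φ₃ = φ ⊗ id_B`, tensoring `φ` with `id_B` in the third position. -/
noncomputable def phiThree (φ : M' ⊗[A] B →ₗ[A] B ⊗[A] M') :
    (M' ⊗[A] B) ⊗[A] B →ₗ[A] (B ⊗[A] M') ⊗[A] B :=
  TensorProduct.map φ LinearMap.id

/-- `φ₂`, tensoring `φ` with `id_B` in the second position: on pure tensors,
`m ⊗ b ⊗ b' ↦ ∑ cᵢ ⊗ b ⊗ mᵢ` where `φ(m ⊗ b') = ∑ cᵢ ⊗ mᵢ`. -/
noncomputable def phiTwo (φ : M' ⊗[A] B →ₗ[A] B ⊗[A] M') :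
    (M' ⊗[A] B) ⊗[A] B →ₗ[A] (B ⊗[A] B) ⊗[A] M' :=
  (TensorProduct.assoc A B B M').symm.toLinearMap ∘ₗ
    TensorProduct.map LinearMap.id (TensorProduct.comm A M' B).toLinearMap ∘ₗ
      (TensorProduct.assoc A B M' B).toLinearMap ∘ₗ
        TensorProduct.map φ LinearMap.id ∘ₗ
          (TensorProduct.assoc A M' B B).symm.toLinearMap ∘ₗ
            TensorProduct.map LinearMap.id (TensorProduct.comm A B B).toLinearMap ∘ₗ
              (TensorProduct.assoc A M' B B).toLinearMap

/-- The canonical map `B ⊗[A] N → M'`, `b ⊗ n ↦ b • n`, for an `A`-submodule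
`N` of the `B`-module `M'`. -/
noncomputable def descentExpansion (N : Submodule A M') : B ⊗[A] N →ₗ[A] M' :=
  TensorProduct.lift
    { toFun := fun b => ((LinearMap.lsmul B M' b).restrictScalars A) ∘ₗ N.subtype
      map_add' := fun b b' => by ext n; simp [add_smul]
      map_smul' := fun a b => by ext n; simp [smul_assoc] }

/-!
Write `ι : M' → B ⊗ M'`, `ι m = 1 ⊗ m`, and `β m = φ (m ⊗ 1)`, so that `M` is the equalizer of `ι`
and `β`. By flatness `M ⊗ B` is the equalizer of `ι ⊗ id_B` and `β ⊗ id_B` on `M' ⊗ B`. The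
cocycle condition, evaluated at `m ⊗ 1 ⊗ b`, says that the isomorphisms `φ` and `id_B ⊗ φ` carry
this pair of maps to the pair `x ↦ 1 ⊗ x`, `id_B ⊗ ι` on `B ⊗ M'`. These two agree on the image of
`ι`, so every `φ⁻¹ (1 ⊗ m)` lies in `M ⊗ B`. Since `φ (n ⊗ b) = 1 ⊗ b n` for `n ∈ M` and `ι` is
injective, `φ` identifies `M ⊗ B` with `M'` by `n ⊗ b ↦ b n`.
-/

section EqLocus

variable {R M N : Type*} (P : Type*) [CommRing R] [AddCommGroup M] [AddCommGroup N]
  [AddCommGroup P] [Module R M] [Module R N] [Module R P]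

theorem eqLocus_rTensor_eq_range [Module.Flat R P] (f g : M →ₗ[R] N) :
    LinearMap.eqLocus (f.rTensor P) (g.rTensor P) =
      LinearMap.range ((LinearMap.eqLocus f g).subtype.rTensor P) := by
  rw [LinearMap.eqLocus_eq_ker_sub, LinearMap.eqLocus_eq_ker_sub, ← LinearMap.rTensor_sub]
  exact (Module.Flat.rTensor_exact P (f - g).exact_subtype_ker_map).linearMap_ker_eq

end EqLocus

section Coaction

variable {R S M : Type*} [CommSemiring R] [CommSemiring S] [Algebra R S]
  [AddCommMonoid M] [Module R M]

theorem mk_one_injective_of_isScalarTower [Module S M] [IsScalarTower R S M] :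
    Function.Injective (TensorProduct.mk R S M 1) :=
  Function.LeftInverse.injective (g := LinearMap.id.liftBaseChange S) fun m ↦ by simp

/-- The coaction `m ↦ φ (m ⊗ 1)` of a gluing map `φ`: the second of the two maps `M → S ⊗ M` whose
equalizer is the descended module. -/
noncomputable def descentCoaction (φ : M ⊗[R] S →ₗ[R] S ⊗[R] M) : M →ₗ[R] S ⊗[R] M :=
  φ ∘ₗ (TensorProduct.mk R M S).flip 1

@[simp]
theorem descentCoaction_apply (φ : M ⊗[R] S →ₗ[R] S ⊗[R] M) (m : M) :
    descentCoaction φ m = φ (m ⊗ₜ[R] 1) :=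
  rfl

/-- The descended module of a gluing map `φ`: the `R`-submodule of those `m` with
`1 ⊗ m = φ (m ⊗ 1)`. -/
noncomputable def descentSubmodule (φ : M ⊗[R] S →ₗ[R] S ⊗[R] M) : Submodule R M :=
  LinearMap.eqLocus (TensorProduct.mk R S M 1) (descentCoaction φ)

theorem mem_descentSubmodule {φ : M ⊗[R] S →ₗ[R] S ⊗[R] M} {m : M} :
    m ∈ descentSubmodule φ ↔ 1 ⊗ₜ[R] m = φ (m ⊗ₜ[R] 1) :=
  Iff.rfl

theorem lTensor_assoc_rTensor_mk_one (φ : M ⊗[R] S →ₗ[R] S ⊗[R] M) (y : M ⊗[R] S) :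
    φ.lTensor S (TensorProduct.assoc R S M S ((TensorProduct.mk R S M 1).rTensor S y)) =
      1 ⊗ₜ[R] φ y := by
  induction y with
  | zero => simp
  | add x y hx hy => simp only [map_add, hx, hy, TensorProduct.tmul_add]
  | tmul m s => simp

theorem lTensor_comm_assoc_tmul_one (x : S ⊗[R] M) :
    (TensorProduct.comm R M S).toLinearMap.lTensor S
        (TensorProduct.assoc R S M S (x ⊗ₜ[R] 1)) =
      (TensorProduct.mk R S M 1).lTensor S x := by
  induction x with
  | zero => simp
  | add x y hx hy => simp only [map_add, TensorProduct.add_tmul, hx, hy]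
  | tmul s m => simp

variable [Module S M] [IsScalarTower R S M]

theorem apply_rTensor_subtype_descentSubmodule {φ : M ⊗[R] S →ₗ[R] S ⊗[R] M}
    (hφ : ∀ (m : M) (s : S),
      φ (m ⊗ₜ[R] s) = (Algebra.lsmul R R M s).lTensor S (φ (m ⊗ₜ[R] 1)))
    (x : S ⊗[R] descentSubmodule φ) :
    φ ((descentSubmodule φ).subtype.rTensor S (TensorProduct.comm R S _ x)) =
      1 ⊗ₜ[R] (descentSubmodule φ).subtype.liftBaseChange S x := by
  induction x with
  | zero => simp
  | add x y hx hy => simp only [map_add, hx, hy, TensorProduct.tmul_add]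
  | tmul s n => simp [hφ n s, ← mem_descentSubmodule.1 n.2]

end Coaction

section FlatDescent

variable {R S M : Type*} [CommRing R] [CommRing S] [Algebra R S] [Module.Flat R S]
  [AddCommGroup M] [Module R M] {φ : M ⊗[R] S →ₗ[R] S ⊗[R] M}

theorem mem_range_rTensor_subtype_descentSubmodule
    (hcocycle : ∀ y : M ⊗[R] S,
      φ.lTensor S (TensorProduct.assoc R S M S ((descentCoaction φ).rTensor S y)) =
        (TensorProduct.mk R S M 1).lTensor S (φ y))
    (hinj : Function.Injective φ) {y : M ⊗[R] S} {m : M} (hy : φ y = 1 ⊗ₜ[R] m) :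
    y ∈ LinearMap.range ((descentSubmodule φ).subtype.rTensor S) := by
  rw [descentSubmodule, ← eqLocus_rTensor_eq_range, LinearMap.mem_eqLocus]
  apply (TensorProduct.assoc R S M S).injective
  apply Module.Flat.lTensor_preserves_injective_linearMap (M := S) φ hinj
  rw [lTensor_assoc_rTensor_mk_one, hcocycle, hy, LinearMap.lTensor_tmul, TensorProduct.mk_apply]

variable [Module S M] [IsScalarTower R S M]

theorem liftBaseChange_subtype_descentSubmodule_injective
    (hφ : ∀ (m : M) (s : S),
      φ (m ⊗ₜ[R] s) = (Algebra.lsmul R R M s).lTensor S (φ (m ⊗ₜ[R] 1)))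
    (hinj : Function.Injective φ) :
    Function.Injective ((descentSubmodule φ).subtype.liftBaseChange S) := by
  have hsubtype : Function.Injective ((descentSubmodule φ).subtype.rTensor S) :=
    Module.Flat.rTensor_preserves_injective_linearMap _ (Submodule.injective_subtype _)
  intro x y hxy
  apply (TensorProduct.comm R S _).injective
  apply hsubtype
  apply hinj
  simp only [apply_rTensor_subtype_descentSubmodule hφ, hxy]

theorem liftBaseChange_subtype_descentSubmodule_bijective
    (hφ : ∀ (m : M) (s : S),
      φ (m ⊗ₜ[R] s) = (Algebra.lsmul R R M s).lTensor S (φ (m ⊗ₜ[R] 1)))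
    (hcocycle : ∀ y : M ⊗[R] S,
      φ.lTensor S (TensorProduct.assoc R S M S ((descentCoaction φ).rTensor S y)) =
        (TensorProduct.mk R S M 1).lTensor S (φ y))
    (hbij : Function.Bijective φ) :
    Function.Bijective ((descentSubmodule φ).subtype.liftBaseChange S) := by
  refine ⟨liftBaseChange_subtype_descentSubmodule_injective hφ hbij.injective, fun m ↦ ?_⟩
  obtain ⟨y, hy⟩ := hbij.surjective (1 ⊗ₜ[R] m)
  obtain ⟨z, rfl⟩ := mem_range_rTensor_subtype_descentSubmodule hcocycle hbij.injective hy
  obtain ⟨x, rfl⟩ := (TensorProduct.comm R S _).surjective z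
  refine ⟨x, mk_one_injective_of_isScalarTower (R := R) (S := S) ?_⟩
  exact (apply_rTensor_subtype_descentSubmodule hφ x).symm.trans hy

end FlatDescent

section Cocycle

variable {R S M : Type u} [CommRing R] [CommRing S] [Algebra R S] [AddCommGroup M] [Module R M]

theorem assoc_phiTwo_tmul_one_tmul (φ : M ⊗[R] S →ₗ[R] S ⊗[R] M) (m : M) (s : S) :
    TensorProduct.assoc R S S M (phiTwo R S M φ ((m ⊗ₜ[R] 1) ⊗ₜ[R] s)) =
      (TensorProduct.mk R S M 1).lTensor S (φ (m ⊗ₜ[R] s)) := by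
  simpa [phiTwo, LinearMap.lTensor] using lTensor_comm_assoc_tmul_one (φ (m ⊗ₜ[R] s))

theorem lTensor_assoc_rTensor_descentCoaction_of_cocycle {φ : M ⊗[R] S →ₗ[R] S ⊗[R] M}
    (hcocycle : phiTwo R S M φ =
      (TensorProduct.assoc R S S M).symm.toLinearMap ∘ₗ phiOne R S M φ ∘ₗ
        (TensorProduct.assoc R S M S).toLinearMap ∘ₗ phiThree R S M φ)
    (y : M ⊗[R] S) :
    φ.lTensor S (TensorProduct.assoc R S M S ((descentCoaction φ).rTensor S y)) =
      (TensorProduct.mk R S M 1).lTensor S (φ y) := by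
  induction y with
  | zero => simp
  | add x y hx hy => simp only [map_add, hx, hy]
  | tmul m s =>
    rw [← assoc_phiTwo_tmul_one_tmul, hcocycle]
    simp [phiOne, phiThree, LinearMap.lTensor]

end Cocycle

theorem descentExpansion_eq_liftBaseChange (N : Submodule A M') :
    descentExpansion A B M' N = (N.subtype.liftBaseChange B).restrictScalars A :=
  TensorProduct.ext' fun _ _ ↦ rfl

theorem faithfully_flat_descent_modules_general [Module.Flat A B]
    (φ : M' ⊗[A] B ≃ₗ[A] B ⊗[A] M')
    (hright : ∀ (b : B) (x : M' ⊗[A] B),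
      φ (TensorProduct.map LinearMap.id (LinearMap.mulLeft A b) x) =
        TensorProduct.map LinearMap.id (bSmul A B M' b) (φ x))
    (hcocycle : phiTwo A B M' φ.toLinearMap =
      (TensorProduct.assoc A B B M').symm.toLinearMap ∘ₗ
        phiOne A B M' φ.toLinearMap ∘ₗ
          (TensorProduct.assoc A B M' B).toLinearMap ∘ₗ
            phiThree A B M' φ.toLinearMap) :
    ∃ N : Submodule A M',
      (∀ m : M', m ∈ N ↔ (1 : B) ⊗ₜ[A] m = φ (m ⊗ₜ[A] (1 : B))) ∧
      Function.Bijective (descentExpansion A B M' N) := by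
  have hφ (m : M') (b : B) :
      φ (m ⊗ₜ[A] b) = (Algebra.lsmul A A M' b).lTensor B (φ (m ⊗ₜ[A] 1)) :=
    calc
      φ (m ⊗ₜ[A] b) = φ (TensorProduct.map LinearMap.id (LinearMap.mulLeft A b) (m ⊗ₜ[A] 1)) := by
        simp
      _ = (Algebra.lsmul A A M' b).lTensor B (φ (m ⊗ₜ[A] 1)) := hright b (m ⊗ₜ[A] 1)
  refine ⟨descentSubmodule φ.toLinearMap, fun _ ↦ mem_descentSubmodule, ?_⟩
  rw [descentExpansion_eq_liftBaseChange]
  exact liftBaseChange_subtype_descentSubmodule_bijective hφ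
    (lTensor_assoc_rTensor_descentCoaction_of_cocycle hcocycle) φ.bijective

/-- **Faithfully flat descent for modules.**  Let `A → B` be a faithfully flat
homomorphism of commutative rings, `M'` a `B`-module, and
`φ : M' ⊗[A] B ≃ B ⊗[A] M'` an isomorphism of `B ⊗[A] B`-modules (for the
actions `(b₁ ⊗ b₂)(m ⊗ b) = b₁m ⊗ b₂b` and `(b₁ ⊗ b₂)(b ⊗ m) = b₁b ⊗ b₂m`)
satisfying the cocycle condition `φ₂ = φ₁ ∘ φ₃`.  Then
`M = {m ∈ M' | 1 ⊗ m = φ(m ⊗ 1)}` is an `A`-submodule of `M'` and the map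
`B ⊗[A] M → M'`, `b ⊗ m ↦ b • m`, is bijective. -/
theorem faithfully_flat_descent_modules [Module.FaithfullyFlat A B]
    (φ : M' ⊗[A] B ≃ₗ[A] B ⊗[A] M')
    (hleft : ∀ (b : B) (x : M' ⊗[A] B),
      φ (TensorProduct.map (bSmul A B M' b) LinearMap.id x) =
        TensorProduct.map (LinearMap.mulLeft A b) LinearMap.id (φ x))
    (hright : ∀ (b : B) (x : M' ⊗[A] B),
      φ (TensorProduct.map LinearMap.id (LinearMap.mulLeft A b) x) =
        TensorProduct.map LinearMap.id (bSmul A B M' b) (φ x))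
    (hcocycle : phiTwo A B M' φ.toLinearMap =
      (TensorProduct.assoc A B B M').symm.toLinearMap ∘ₗ
        phiOne A B M' φ.toLinearMap ∘ₗ
          (TensorProduct.assoc A B M' B).toLinearMap ∘ₗ
            phiThree A B M' φ.toLinearMap) :
    ∃ N : Submodule A M',
      (∀ m : M', m ∈ N ↔ (1 : B) ⊗ₜ[A] m = φ (m ⊗ₜ[A] (1 : B))) ∧
      Function.Bijective (descentExpansion A B M' N) :=
  faithfully_flat_descent_modules_general A B M' φ hright hcocycle

end DescentData
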